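/- Let m ≥ 1 and let v_r, v₃ be axially symmetric functions, twice continuously differentiable on a neighborhood of the closure of D_m, satisfying the divergence-free condition ∂_r v_r + v_r/r + ∂_{x₃} v₃ = 0 in D_m, with v_r = 0 on ∂^V D_m and v₃ = 0 on ∂^H D_m. Then ∫_{D_m} ∂_{x₃} v_r · ∂_r v₃ dx = − ∫_{D_m} ( |∂_r v_r|² + v_r²/r² ) dx, and also ∫_{D_m} ∂_{x₃} v_r · ∂_r v₃ dx = − ∫_{D_m} |∂_{x₃} v₃|² dx. -/

import Mathlib

noncomputable section

open Real MeasureTheory Set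

/-- Inner radius of the `j`-th rectangle: `r_j = 2^(-j)`. -/
def rW (j : ℕ) : ℝ := (2 : ℝ) ^ (-(j : ℝ))

/-- Height of the `j`-th rectangle: `h_j = 2^(-β (j-1))`. -/
def hH (β : ℝ) (j : ℕ) : ℝ := (2 : ℝ) ^ (-β * ((j : ℝ) - 1))

/-- The rectangle `S_j` in the `(r, x₃)` cross-section. -/
def Srect (β : ℝ) (j : ℕ) : Set (ℝ × ℝ) :=
  {p : ℝ × ℝ | rW j ≤ p.1 ∧ p.1 < rW (j - 1) ∧ 0 < p.2 ∧ p.2 < hH β j}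

/-- The `(r, x₃)` cross-section of the domain `D_m`. -/
def Ddom (β : ℝ) (m : ℕ) : Set (ℝ × ℝ) := ⋃ j ∈ Finset.Icc 1 m, Srect β j

/-- The horizontal part `∂^H D_m` of the boundary of `D_m` (where `x₃` is locally constant). -/
def bdH (β : ℝ) (m : ℕ) : Set (ℝ × ℝ) :=
  {p : ℝ × ℝ | p.2 = 0 ∧ rW m ≤ p.1 ∧ p.1 ≤ 1} ∪
    ⋃ j ∈ Finset.Icc 1 m,
      {p : ℝ × ℝ | p.2 = hH β j ∧ rW j ≤ p.1 ∧ p.1 ≤ rW (j - 1)}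

/-- The vertical part `∂^V D_m` of the boundary of `D_m` (where `r` is locally constant). -/
def bdV (β : ℝ) (m : ℕ) : Set (ℝ × ℝ) :=
  {p : ℝ × ℝ | p.1 = 1 ∧ 0 ≤ p.2 ∧ p.2 ≤ 1} ∪
    {p : ℝ × ℝ | p.1 = rW m ∧ 0 ≤ p.2 ∧ p.2 ≤ hH β m} ∪
    ⋃ j ∈ Finset.Icc 1 (m - 1),
      {p : ℝ × ℝ | p.1 = rW j ∧ hH β (j + 1) ≤ p.2 ∧ p.2 ≤ hH β j}

/-- The full boundary `∂ D_m` of `D_m`. -/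
def bdD (β : ℝ) (m : ℕ) : Set (ℝ × ℝ) := bdH β m ∪ bdV β m

/-- The corner points of the polygonal cross-section of `D_m`
(i.e. the corner circles of the 3D domain). -/
def cornerSet (β : ℝ) (m : ℕ) : Set (ℝ × ℝ) :=
  ({(rW m, 0), ((1 : ℝ), 0), ((1 : ℝ), (1 : ℝ)), (rW m, hH β m)} : Set (ℝ × ℝ)) ∪
    ⋃ j ∈ Finset.Icc 1 (m - 1),
      ({(rW j, hH β j), (rW j, hH β (j + 1))} : Set (ℝ × ℝ))

/-- Radial partial derivative `∂_r`. -/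
def pdr (F : ℝ × ℝ → ℝ) (p : ℝ × ℝ) : ℝ := deriv (fun r => F (r, p.2)) p.1

/-- Vertical partial derivative `∂_{x₃}`. -/
def pdz (F : ℝ × ℝ → ℝ) (p : ℝ × ℝ) : ℝ := deriv (fun z => F (p.1, z)) p.2

/-- The axially symmetric Laplacian `Δ = ∂_r² + (1/r) ∂_r + ∂_{x₃}²`. -/
def cylLap (F : ℝ × ℝ → ℝ) (p : ℝ × ℝ) : ℝ :=
  pdr (pdr F) p + (1 / p.1) * pdr F p + pdz (pdz F) p

/-- The integral of an axially symmetric function over the 3-dimensional domain `D_m`,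
computed in the cross-section: `∫_{D_m} f dx = 2π ∬ F r dr dx₃`. -/
def cylIntegral (β : ℝ) (m : ℕ) (F : ℝ × ℝ → ℝ) : ℝ :=
  ∫ p in Ddom β m, F p * (2 * π * p.1)

/-- The vertical cross-section segment `D_m ∩ {r = c}` of the cross-section. -/
def vertSeg (β : ℝ) (m : ℕ) (c : ℝ) : Set ℝ := {z : ℝ | (c, z) ∈ Ddom β m}
lemma ibp_rW_pos (j : ℕ) : 0 < rW j := by unfold rW; positivity

lemma ibp_hH_pos (β : ℝ) (j : ℕ) : 0 < hH β j := by unfold hH; positivity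

lemma ibp_rW_anti {i j : ℕ} (h : i ≤ j) : rW j ≤ rW i := by
  unfold rW
  apply Real.rpow_le_rpow_of_exponent_le (by norm_num)
  simpa using h

lemma ibp_rW_lt {i j : ℕ} (h : i < j) : rW j < rW i := by
  unfold rW
  apply Real.rpow_lt_rpow_of_exponent_lt (by norm_num)
  simpa using h

lemma ibp_hH_anti {β : ℝ} (hβ : 1 < β) {i j : ℕ} (h : i ≤ j) : hH β j ≤ hH β i := by
  unfold hH
  apply Real.rpow_le_rpow_of_exponent_le (by norm_num)
  have : (i : ℝ) ≤ j := by exact_mod_cast h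
  nlinarith

lemma ibp_rW_zero : rW 0 = 1 := by simp [rW]

lemma ibp_hH_one (β : ℝ) : hH β 1 = 1 := by simp [hH]

lemma ibp_Srect_eq (β : ℝ) (j : ℕ) :
    Srect β j = Ico (rW j) (rW (j - 1)) ×ˢ Ioo 0 (hH β j) := by
  ext p; simp only [Srect, mem_ofPred_eq, mem_prod, mem_Ico, mem_Ioo]; tauto

lemma ibp_Srect_ae (β : ℝ) (j : ℕ) :
    Srect β j =ᵐ[volume] Icc (rW j, (0:ℝ)) (rW (j - 1), hH β j) := by
  rw [ibp_Srect_eq, ← Icc_prod_Icc]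
  exact Measure.set_prod_ae_eq Ico_ae_eq_Icc Ioo_ae_eq_Icc

lemma ibp_Icc_subset {β : ℝ} {m j : ℕ} (hj : j ∈ Finset.Icc 1 m) :
    Icc (rW j, (0:ℝ)) (rW (j - 1), hH β j) ⊆ closure (Ddom β m) := by
  have h1 : 1 ≤ j := (Finset.mem_Icc.1 hj).1
  have : Icc (rW j, (0:ℝ)) (rW (j - 1), hH β j) = closure (Srect β j) := by
    rw [ibp_Srect_eq, closure_prod_eq, closure_Ico (ibp_rW_lt (by omega)).ne,
      closure_Ioo (ibp_hH_pos β j).ne, Icc_prod_Icc]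
  rw [this]
  exact closure_mono (Set.subset_biUnion_of_mem (u := fun j => Srect β j) hj)

lemma ibp_Srect_meas (β : ℝ) (j : ℕ) : MeasurableSet (Srect β j) := by
  rw [ibp_Srect_eq]; exact measurableSet_Ico.prod measurableSet_Ioo

lemma ibp_Ddom_meas (β : ℝ) (m : ℕ) : MeasurableSet (Ddom β m) :=
  Finset.measurableSet_biUnion _ fun j _ => ibp_Srect_meas β j

lemma ibp_Srect_disj (β : ℝ) (s : Set ℕ) :
    s.Pairwise (Function.onFun Disjoint (Srect β)) := by
  have key : ∀ i j : ℕ, i < j → Disjoint (Srect β i) (Srect β j) := by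
    intro i j hij
    rw [Set.disjoint_left]
    rintro p ⟨h1, -⟩ ⟨-, h2, -⟩
    have := ibp_rW_anti (show i ≤ j - 1 by omega)
    linarith
  intro i _ j _ hij
  rcases lt_or_gt_of_ne hij with h | h
  · exact key i j h
  · exact (key j i h).symm

lemma ibp_intOn_rect {β : ℝ} {m : ℕ} {F : ℝ × ℝ → ℝ}
    (hF : ContinuousOn F (closure (Ddom β m))) (j : ℕ) (hj : j ∈ Finset.Icc 1 m) :
    IntegrableOn F (Icc (rW j, (0:ℝ)) (rW (j - 1), hH β j)) :=
  (hF.mono (ibp_Icc_subset hj)).integrableOn_compact isCompact_Icc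

lemma ibp_intOn {β : ℝ} {m : ℕ} {F : ℝ × ℝ → ℝ}
    (hF : ContinuousOn F (closure (Ddom β m))) : IntegrableOn F (Ddom β m) := by
  unfold Ddom
  rw [integrableOn_finset_iUnion]
  intro j hj
  exact (ibp_intOn_rect hF j hj).congr_set_ae (ibp_Srect_ae β j)

/-- Divergence theorem on `D_m` for fields tangent to the boundary. -/
lemma ibp_div_thm {β : ℝ} (hβ : 1 < β) {m : ℕ} (hm : 1 ≤ m) {U : Set (ℝ × ℝ)} (hU : IsOpen U)
    (hDU : closure (Ddom β m) ⊆ U) (f g : ℝ × ℝ → ℝ) (hf : ContDiffOn ℝ 1 f U)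
    (hg : ContDiffOn ℝ 1 g U) (hfV : ∀ p ∈ bdV β m, f p = 0) (hgH : ∀ p ∈ bdH β m, g p = 0) :
    IntegrableOn (fun p => fderiv ℝ f p (1, 0) + fderiv ℝ g p (0, 1)) (Ddom β m) ∧
    ∫ p in Ddom β m, (fderiv ℝ f p (1, 0) + fderiv ℝ g p (0, 1)) = 0 := by
  have hc : ContinuousOn (fun p => fderiv ℝ f p (1, 0) + fderiv ℝ g p (0, 1))
      (closure (Ddom β m)) := by
    have h1 := (hf.continuousOn_fderiv_of_isOpen hU le_rfl).mono hDU
    have h2 := (hg.continuousOn_fderiv_of_isOpen hU le_rfl).mono hDU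
    exact (h1.clm_apply continuousOn_const).add (h2.clm_apply continuousOn_const)
  refine ⟨ibp_intOn hc, ?_⟩
  have hrect : ∀ j ∈ Finset.Icc 1 m,
      ∫ p in Srect β j, (fderiv ℝ f p (1, 0) + fderiv ℝ g p (0, 1)) =
      (∫ y in (0:ℝ)..hH β j, f (rW (j-1), y)) - ∫ y in (0:ℝ)..hH β j, f (rW j, y) := by
    intro j hj
    obtain ⟨hj1, hjm⟩ := Finset.mem_Icc.1 hj
    have hsub : Icc (rW j, (0:ℝ)) (rW (j - 1), hH β j) ⊆ U := (ibp_Icc_subset hj).trans hDU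
    have hle : rW j ≤ rW (j-1) := ibp_rW_anti (by omega)
    rw [setIntegral_congr_set (ibp_Srect_ae β j)]
    have hmem : ∀ x ∈ Ioo (rW j) (rW (j-1)) ×ˢ Ioo (0:ℝ) (hH β j), x ∈ U := by
      intro x hx
      apply hsub
      rw [← Icc_prod_Icc]
      exact ⟨Ioo_subset_Icc_self hx.1, Ioo_subset_Icc_self hx.2⟩
    rw [integral_divergence_prod_Icc_of_hasFDerivAt_of_le f g (fderiv ℝ f) (fderiv ℝ g) _ _
      ⟨hle, (ibp_hH_pos β j).le⟩ (hf.continuousOn.mono hsub)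
      (hg.continuousOn.mono hsub)
      (fun x hx => ((hf.differentiableOn one_ne_zero).differentiableAt
        (hU.mem_nhds (hmem x hx))).hasFDerivAt)
      (fun x hx => ((hg.differentiableOn one_ne_zero).differentiableAt
        (hU.mem_nhds (hmem x hx))).hasFDerivAt)
      (ibp_intOn_rect hc j hj)]
    have e1 : ∫ x in (rW j)..(rW (j-1)), g (x, hH β j) = 0 := by
      rw [intervalIntegral.integral_congr (g := fun _ => (0:ℝ)), intervalIntegral.integral_zero]
      intro x hx
      rw [uIcc_of_le hle] at hx
      exact hgH _ (Or.inr (mem_biUnion (x := j) (by exact_mod_cast hj) ⟨rfl, hx.1, hx.2⟩))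
    have e2 : ∫ x in (rW j)..(rW (j-1)), g (x, 0) = 0 := by
      rw [intervalIntegral.integral_congr (g := fun _ => (0:ℝ)), intervalIntegral.integral_zero]
      intro x hx
      rw [uIcc_of_le hle] at hx
      refine hgH _ (Or.inl ⟨rfl, (ibp_rW_anti hjm).trans hx.1, hx.2.trans ?_⟩)
      rw [← ibp_rW_zero]; exact ibp_rW_anti (by omega)
    simp only [e1, e2]
    ring
  have hsum : ∀ n, 1 ≤ n → n ≤ m →
      ∑ j ∈ Finset.Icc 1 n,
        ((∫ y in (0:ℝ)..hH β j, f (rW (j-1), y)) - ∫ y in (0:ℝ)..hH β j, f (rW j, y)) =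
      - ∫ y in (0:ℝ)..hH β n, f (rW n, y) := by
    intro n hn
    induction n, hn using Nat.le_induction with
    | base =>
      intro _
      have : ∫ y in (0:ℝ)..hH β 1, f (rW 0, y) = 0 := by
        rw [intervalIntegral.integral_congr (g := fun _ => (0:ℝ)), intervalIntegral.integral_zero]
        intro x hx
        rw [uIcc_of_le (ibp_hH_pos β 1).le, ibp_hH_one] at hx
        exact hfV _ (Or.inl (Or.inl ⟨ibp_rW_zero, hx.1, hx.2⟩))
      simp [this]
    | succ n hn ih =>
      intro hnm
      rw [Finset.sum_Icc_succ_top (by omega), ih (by omega)]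
      have hle : hH β (n+1) ≤ hH β n := ibp_hH_anti hβ (by omega)
      have hcont : ContinuousOn (fun y => f (rW n, y)) (Icc 0 (hH β n)) := by
        refine hf.continuousOn.comp (by fun_prop) ?_
        intro y hy
        apply hDU
        apply ibp_Icc_subset (j := n) (Finset.mem_Icc.2 ⟨hn, by omega⟩)
        rw [← Icc_prod_Icc]
        exact ⟨⟨le_rfl, ibp_rW_anti (by omega)⟩, hy⟩
      have hz : ∫ y in (hH β (n+1))..hH β n, f (rW n, y) = 0 := by
        rw [intervalIntegral.integral_congr (g := fun _ => (0:ℝ)), intervalIntegral.integral_zero]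
        intro x hx
        rw [uIcc_of_le hle] at hx
        refine hfV _ (Or.inr (mem_biUnion (x := n) ?_ ⟨rfl, hx.1, hx.2⟩))
        simp only [Finset.coe_Icc, mem_Icc]; exact ⟨hn, by omega⟩
      have hadd := intervalIntegral.integral_add_adjacent_intervals
        (a := 0) (b := hH β (n+1)) (c := hH β n) (f := fun y => f (rW n, y)) (μ := volume)
        (ContinuousOn.intervalIntegrable_of_Icc (ibp_hH_pos β _).le
          (hcont.mono (Icc_subset_Icc le_rfl hle)))
        (ContinuousOn.intervalIntegrable_of_Icc hle
          (hcont.mono (Icc_subset_Icc (ibp_hH_pos β _).le le_rfl)))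
      rw [hz] at hadd
      simp only [Nat.add_sub_cancel]
      linarith
  have hlast : ∫ y in (0:ℝ)..hH β m, f (rW m, y) = 0 := by
    rw [intervalIntegral.integral_congr (g := fun _ => (0:ℝ)), intervalIntegral.integral_zero]
    intro x hx
    rw [uIcc_of_le (ibp_hH_pos β m).le] at hx
    exact hfV _ (Or.inl (Or.inr ⟨rfl, hx.1, hx.2⟩))
  have hcS := fun j hj => (ibp_intOn_rect hc j hj).congr_set_ae (ibp_Srect_ae β j)
  have htot := integral_biUnion_finset (μ := volume) (Finset.Icc 1 m)
    (fun j _ => ibp_Srect_meas β j) (ibp_Srect_disj β _) hcS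
  unfold Ddom
  rw [htot, Finset.sum_congr rfl hrect, hsum m hm le_rfl, hlast, neg_zero]

lemma ibp_pdr_has {F : ℝ × ℝ → ℝ} {p : ℝ × ℝ} (h : DifferentiableAt ℝ F p) :
    HasDerivAt (fun r => F (r, p.2)) (fderiv ℝ F p (1, 0)) p.1 := by
  have h1 : HasDerivAt (fun r : ℝ => (r, p.2)) ((1:ℝ), (0:ℝ)) p.1 :=
    (hasDerivAt_id p.1).prodMk (hasDerivAt_const _ _)
  exact HasFDerivAt.comp_hasDerivAt (l := F) p.1 h.hasFDerivAt h1

lemma ibp_pdr {F : ℝ × ℝ → ℝ} {p : ℝ × ℝ} (h : DifferentiableAt ℝ F p) :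
    pdr F p = fderiv ℝ F p (1, 0) := (ibp_pdr_has h).deriv

lemma ibp_pdz {F : ℝ × ℝ → ℝ} {p : ℝ × ℝ} (h : DifferentiableAt ℝ F p) :
    pdz F p = fderiv ℝ F p (0, 1) := by
  have h1 : HasDerivAt (fun z : ℝ => (p.1, z)) ((0:ℝ), (1:ℝ)) p.2 :=
    (hasDerivAt_const _ _).prodMk (hasDerivAt_id p.2)
  exact (HasFDerivAt.comp_hasDerivAt (l := F) p.2 h.hasFDerivAt h1).deriv

lemma ibp_tangent {F : ℝ × ℝ → ℝ} {a b c r : ℝ} (hab : a < b) (hr : r ∈ Icc a b)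
    (h : DifferentiableAt ℝ F (r, c)) (h0 : ∀ x ∈ Icc a b, F (x, c) = 0) :
    fderiv ℝ F (r, c) (1, 0) = 0 := by
  have h1 := (ibp_pdr_has h).hasDerivWithinAt (s := Icc a b)
  have h2 : HasDerivWithinAt (fun x => F (x, c)) 0 (Icc a b) r :=
    (hasDerivWithinAt_const r (Icc a b) (0:ℝ)).congr (fun x hx => h0 x hx) (h0 r hr)
  exact (uniqueDiffOn_Icc hab r hr).eq_deriv _ h1 h2

lemma ibp_tangent_bdH {β : ℝ} {m : ℕ} (hm : 1 ≤ m) {F : ℝ × ℝ → ℝ}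
    (hF : ∀ p ∈ closure (Ddom β m), DifferentiableAt ℝ F p) (h0 : ∀ p ∈ bdH β m, F p = 0) :
    ∀ p ∈ bdH β m, fderiv ℝ F p (1, 0) = 0 := by
  -- every segment is treated through the closed rectangle it bounds
  have bot : ∀ n, 1 ≤ n → ∀ x, rW n ≤ x → x ≤ 1 →
      ∃ j ∈ Finset.Icc 1 n, x ∈ Icc (rW j) (rW (j-1)) := by
    intro n hn
    induction n, hn using Nat.le_induction with
    | base =>
      intro x h1 h2
      exact ⟨1, by simp, h1, by simpa [ibp_rW_zero] using h2⟩
    | succ n hn ih =>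
      intro x h1 h2
      rcases le_total (rW n) x with h | h
      · obtain ⟨j, hj, hx⟩ := ih x h h2
        exact ⟨j, Finset.Icc_subset_Icc le_rfl (by omega) hj, hx⟩
      · exact ⟨n+1, by simp, h1, by simpa using h⟩
  rintro ⟨x, z⟩ (⟨hz, h1, h2⟩ | hp)
  · simp only at hz h1 h2
    subst hz
    have hlt : rW m < 1 := by rw [← ibp_rW_zero]; exact ibp_rW_lt (by omega)
    obtain ⟨j, hj, hx⟩ := bot m hm x h1 h2
    refine ibp_tangent hlt ⟨h1, h2⟩ (hF _ (ibp_Icc_subset hj ?_))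
      (fun y hy => h0 _ (Or.inl ⟨rfl, hy.1, hy.2⟩))
    rw [← Icc_prod_Icc]
    exact ⟨hx, le_rfl, (ibp_hH_pos β j).le⟩
  · simp only [mem_iUnion] at hp
    obtain ⟨j, hj, hz, h1, h2⟩ := hp
    simp only at hz h1 h2
    subst hz
    have hj1 := (Finset.mem_Icc.1 hj).1
    have hlt : rW j < rW (j-1) := ibp_rW_lt (by omega)
    refine ibp_tangent hlt ⟨h1, h2⟩ (hF _ (ibp_Icc_subset hj ?_))
      (fun y hy => h0 _ (Or.inr (mem_biUnion (x := j) (by exact_mod_cast hj) ⟨rfl, hy.1, hy.2⟩)))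
    rw [← Icc_prod_Icc]
    exact ⟨⟨h1, h2⟩, (ibp_hH_pos β j).le, le_rfl⟩

/-- Integration by parts identities for a divergence-free
axially symmetric field `(v_r, v₃)` with the stated boundary conditions. -/
theorem div_free_ibp_identities (β : ℝ) (hβ : 1 < β) (hβ' : β ≤ 1.1)
    (m : ℕ) (hm : 1 ≤ m) (vr v3 : ℝ × ℝ → ℝ)
    (hvr : ∃ U : Set (ℝ × ℝ), IsOpen U ∧ closure (Ddom β m) ⊆ U ∧ ContDiffOn ℝ 2 vr U)
    (hv3 : ∃ U : Set (ℝ × ℝ), IsOpen U ∧ closure (Ddom β m) ⊆ U ∧ ContDiffOn ℝ 2 v3 U)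
    (hdiv : ∀ p ∈ Ddom β m, pdr vr p + vr p / p.1 + pdz v3 p = 0)
    (hvrV : ∀ p ∈ bdV β m, vr p = 0)
    (hv3H : ∀ p ∈ bdH β m, v3 p = 0) :
    (cylIntegral β m fun p => pdz vr p * pdr v3 p)
        = -cylIntegral β m (fun p => (pdr vr p) ^ 2 + (vr p) ^ 2 / p.1 ^ 2) ∧
      (cylIntegral β m fun p => pdz vr p * pdr v3 p)
        = -cylIntegral β m (fun p => (pdz v3 p) ^ 2) := by
  obtain ⟨U₁, hU₁, hD₁, hu⟩ := hvr
  obtain ⟨U₂, hU₂, hD₂, hw⟩ := hv3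
  obtain ⟨U, hU, hDU, hu, hw⟩ : ∃ U : Set (ℝ × ℝ), IsOpen U ∧ closure (Ddom β m) ⊆ U ∧
      ContDiffOn ℝ 2 vr U ∧ ContDiffOn ℝ 2 v3 U :=
    ⟨U₁ ∩ U₂, hU₁.inter hU₂, subset_inter hD₁ hD₂, hu.mono inter_subset_left,
      hw.mono inter_subset_right⟩
  have hDD : Ddom β m ⊆ U := subset_closure.trans hDU
  have hud : ∀ p ∈ U, DifferentiableAt ℝ vr p := fun p hp =>
    (hu.differentiableOn two_ne_zero).differentiableAt (hU.mem_nhds hp)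
  have hwd : ∀ p ∈ U, DifferentiableAt ℝ v3 p := fun p hp =>
    (hw.differentiableOn two_ne_zero).differentiableAt (hU.mem_nhds hp)
  have hu1 : ContDiffOn ℝ 1 vr U := hu.of_le one_le_two
  have hw' : ContDiffOn ℝ 1 (fderiv ℝ v3) U :=
    hw.fderiv_of_isOpen hU (by norm_num [one_add_one_eq_two])
  have hwr : ContDiffOn ℝ 1 (fun p => fderiv ℝ v3 p (1, 0)) U := hw'.clm_apply contDiffOn_const
  have hwz : ContDiffOn ℝ 1 (fun p => fderiv ℝ v3 p (0, 1)) U := hw'.clm_apply contDiffOn_const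
  have hfst : ContDiffOn ℝ 1 (fun p : ℝ × ℝ => p.1) U := contDiff_fst.contDiffOn
  have htan := ibp_tangent_bdH hm (fun p hp => hwd p (hDU hp)) hv3H
  obtain ⟨hi1, hI1⟩ := ibp_div_thm hβ hm hU hDU
    (fun p => -(p.1 * vr p * fderiv ℝ v3 p (0, 1))) (fun p => p.1 * vr p * fderiv ℝ v3 p (1, 0))
    ((hfst.mul hu1).mul hwz).neg ((hfst.mul hu1).mul hwr)
    (fun p hp => by simp [hvrV p hp]) (fun p hp => by simp [htan p hp])
  obtain ⟨hi2, hI2⟩ := ibp_div_thm hβ hm hU hDU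
    (fun p => vr p ^ 2) (fun _ => 0) (hu1.pow 2) contDiffOn_const
    (fun p hp => by simp [hvrV p hp]) (fun p hp => rfl)
  have hpos : ∀ p ∈ Ddom β m, 0 < p.1 := by
    intro p hp
    simp only [Ddom, mem_iUnion] at hp
    obtain ⟨j, -, h, -⟩ := hp
    exact (ibp_rW_pos j).trans_le h
  have hi3 : IntegrableOn (fun p => (pdz v3 p) ^ 2 * (2 * π * p.1)) (Ddom β m) := by
    have : ContinuousOn (fun p => (fderiv ℝ v3 p (0, 1)) ^ 2 * (2 * π * p.1))
        (closure (Ddom β m)) :=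
      (((hwz.continuousOn.pow 2).mul (continuousOn_const.mul hfst.continuousOn))).mono hDU
    refine (ibp_intOn this).congr_fun (fun p hp => ?_) (ibp_Ddom_meas β m)
    simp only [ibp_pdz (hwd p (hDD hp))]
  have e1 : ∀ p ∈ Ddom β m,
      fderiv ℝ (fun p : ℝ × ℝ => -(p.1 * vr p * fderiv ℝ v3 p (0, 1))) p (1, 0) +
      fderiv ℝ (fun p : ℝ × ℝ => p.1 * vr p * fderiv ℝ v3 p (1, 0)) p (0, 1) =
      p.1 * (pdz vr p * pdr v3 p) + p.1 * (pdz v3 p) ^ 2 := by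
    intro p hp
    have hpU := hDD hp
    have d0 : HasFDerivAt (fun p : ℝ × ℝ => p.1) (ContinuousLinearMap.fst ℝ ℝ ℝ) p :=
      hasFDerivAt_fst
    have d1 := (hud p hpU).hasFDerivAt
    have d2 : HasFDerivAt (fderiv ℝ v3) (fderiv ℝ (fderiv ℝ v3) p) p :=
      ((hw'.differentiableOn one_ne_zero).differentiableAt (hU.mem_nhds hpU)).hasFDerivAt
    have dz := d2.clm_apply (hasFDerivAt_const ((0:ℝ), (1:ℝ)) p)
    have dr := d2.clm_apply (hasFDerivAt_const ((1:ℝ), (0:ℝ)) p)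
    have hsym : fderiv ℝ (fderiv ℝ v3) p (1, 0) (0, 1) = fderiv ℝ (fderiv ℝ v3) p (0, 1) (1, 0) :=
      ((hw.contDiffAt (hU.mem_nhds hpU)).isSymmSndFDerivAt (by simp)) _ _
    have hd := hdiv p hp
    have hp0 := (hpos p hp).ne'
    have f1 : HasFDerivAt (fun p : ℝ × ℝ => -(p.1 * vr p * fderiv ℝ v3 p (0, 1))) _ p :=
      ((d0.mul d1).mul dz).neg
    have f2 : HasFDerivAt (fun p : ℝ × ℝ => p.1 * vr p * fderiv ℝ v3 p (1, 0)) _ p :=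
      (d0.mul d1).mul dr
    rw [f1.fderiv, f2.fderiv]
    rw [ibp_pdr (hud p hpU), ibp_pdz (hwd p hpU)] at hd
    rw [ibp_pdz (hud p hpU), ibp_pdz (hwd p hpU), ibp_pdr (hwd p hpU)]
    have hd' : p.1 * fderiv ℝ vr p (1, 0) + vr p = - (p.1 * fderiv ℝ v3 p (0, 1)) := by
      field_simp at hd
      linarith
    simp [hsym]
    linear_combination (-fderiv ℝ v3 p (0, 1)) * hd'
  have e2 : ∀ p ∈ Ddom β m,
      fderiv ℝ (fun p : ℝ × ℝ => vr p ^ 2) p (1, 0) +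
      fderiv ℝ (fun _ : ℝ × ℝ => (0:ℝ)) p (0, 1) = 2 * vr p * pdr vr p := by
    intro p hp
    have hpU := hDD hp
    rw [((hud p hpU).hasFDerivAt.pow 2).fderiv, ibp_pdr (hud p hpU)]
    simp
  have key2 : (cylIntegral β m fun p => pdz vr p * pdr v3 p)
        = -cylIntegral β m (fun p => (pdz v3 p) ^ 2) := by
    have hi3n : IntegrableOn (fun p => -((pdz v3 p) ^ 2 * (2 * π * p.1))) (Ddom β m) := hi3.neg
    unfold cylIntegral
    rw [← integral_neg, ← add_zero (∫ p in Ddom β m, -(pdz v3 p ^ 2 * (2 * π * p.1))),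
      ← mul_zero (2 * π), ← hI1, ← integral_const_mul, ← integral_add hi3n (hi1.const_mul _)]
    refine setIntegral_congr_fun (ibp_Ddom_meas β m) (fun p hp => ?_)
    simp only [e1 p hp]
    ring
  refine ⟨?_, key2⟩
  rw [key2, neg_inj]
  unfold cylIntegral
  symm
  rw [← sub_zero (∫ p in Ddom β m, (pdz v3 p ^ 2 * (2 * π * p.1))),
    ← mul_zero (2 * π), ← hI2, ← integral_const_mul, ← integral_sub hi3 (hi2.const_mul _)]
  refine setIntegral_congr_fun (ibp_Ddom_meas β m) (fun p hp => ?_)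
  have hp0 := (hpos p hp).ne'
  have hz : pdz v3 p = -(pdr vr p + vr p / p.1) := by linarith [hdiv p hp]
  simp only [e2 p hp, hz]
  field_simp
  ring
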